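/- Let {B_i}_{i=0}^{n−1} be an obedient and incentive compatible deterministic representation whose Sender's ex ante payoff is maximal among all obedient and incentive compatible deterministic representations. Then there exists a laminar representation {B_i^L}_{i=0}^{n−1} that is obedient and incentive compatible and satisfies μ_F(B_i^L) = μ_F(B_i) and E[ω | ω ∈ B_i^L] = E[ω | ω ∈ B_i] for every i with μ_F(B_i) > 0; in particular {B_i^L} attains the same maximal Sender's ex ante payoff. -/

import Mathlib

open MeasureTheory Set

noncomputable section

namespace VerifiableDisclosure

/-- The measure on `[0,1]` induced by a density `f`. -/
def densMeasure (f : ℝ → ℝ) : Measure ℝ :=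
  (volume.restrict (Icc (0:ℝ) 1)).withDensity (fun x => ENNReal.ofReal (f x))

/-- `f` is a strictly positive density on `[0,1]` inducing a probability measure. -/
structure IsPrior (f : ℝ → ℝ) : Prop where
  meas : Measurable f
  pos : ∀ x ∈ Icc (0:ℝ) 1, 0 < f x
  prob : densMeasure f univ = 1

/-- The CDF of a measure on `ℝ`. -/
def mcdf (μ : Measure ℝ) (x : ℝ) : ℝ := (μ (Iic x)).toReal

/-- The support of a measure on `ℝ`: points all of whose neighborhoods have positive mass. -/
def msupport (μ : Measure ℝ) : Set ℝ := {x | ∀ U ∈ nhds x, μ U ≠ 0}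

/-- `G` is a distribution on `[0,1]` that is a mean-preserving contraction of `μ`. -/
def IsMPC (μ G : Measure ℝ) : Prop :=
  IsProbabilityMeasure G ∧ msupport G ⊆ Icc (0:ℝ) 1 ∧
    (∀ x ∈ Icc (0:ℝ) 1, (∫ s in (0:ℝ)..x, mcdf G s) ≤ ∫ s in (0:ℝ)..x, mcdf μ s) ∧
    (∫ s in (0:ℝ)..(1:ℝ), mcdf G s) = ∫ s in (0:ℝ)..(1:ℝ), mcdf μ s

/-- Conditional mean of `μ` on the set `B`. -/
def condMean (μ : Measure ℝ) (B : Set ℝ) : ℝ := (∫ ω in B, ω ∂μ) / (μ B).toReal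

/-- `G` is a bi-pooling distribution relative to the prior `μ`. -/
def IsBiPooling (μ G : Measure ℝ) : Prop :=
  IsMPC μ G ∧
    ∃ (ι : Type) (a b : ι → ℝ),
      (∀ i, (0:ℝ) ≤ a i ∧ a i ≤ b i ∧ b i ≤ 1) ∧
      (Pairwise fun i j => Disjoint (Icc (a i) (b i)) (Icc (a j) (b j))) ∧
      (∀ i, G (Icc (a i) (b i)) = μ (Icc (a i) (b i))) ∧
      (∀ i, (msupport (G.restrict (Icc (a i) (b i)))).encard ≤ 2) ∧
      (∀ s : Set ℝ, MeasurableSet s → s ⊆ Icc (0:ℝ) 1 \ (⋃ i, Icc (a i) (b i)) → G s = μ s)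

/-- `G` is a bi-pooling solution of the information design problem with value function `u`. -/
def IsBiPoolingSolution (μ G : Measure ℝ) (u : ℝ → ℝ) : Prop :=
  IsBiPooling μ G ∧ ∀ G' : Measure ℝ, IsMPC μ G' → (∫ x, u x ∂G') ≤ ∫ x, u x ∂G

/-- A deterministic representation: closed sets covering `[0,1]`, pairwise `μ`-null overlaps. -/
def IsDetRep (μ : Measure ℝ) (n : ℕ) (B : ℕ → Set ℝ) : Prop :=
  (∀ i < n, IsClosed (B i) ∧ B i ⊆ Icc (0:ℝ) 1) ∧
    (⋃ i ∈ Finset.range n, B i) = Icc (0:ℝ) 1 ∧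
    (∀ i < n, ∀ j < n, i ≠ j → μ (B i ∩ B j) = 0)

/-- Incentive compatibility of a deterministic representation. -/
def IsIC (n : ℕ) (γ : ℕ → ℝ) (B : ℕ → Set ℝ) : Prop :=
  ∀ i < n, Icc (γ i) (γ (i+1)) ⊆ ⋃ j ∈ Finset.Ico i n, B j

/-- Obedience of a deterministic representation. -/
def IsObedient (μ : Measure ℝ) (n : ℕ) (γ : ℕ → ℝ) (B : ℕ → Set ℝ) : Prop :=
  ∀ i < n, μ (B i) ≠ 0 → condMean μ (B i) ∈ Icc (γ i) (γ (i+1))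

/-- `B` is a deterministic representation of the distribution `G`:
`G` places mass `μ (B i)` on the conditional mean of `B i`. -/
def IsDetRepOf (μ : Measure ℝ) (n : ℕ) (B : ℕ → Set ℝ) (G : Measure ℝ) : Prop :=
  IsDetRep μ n B ∧
    G = ∑ i ∈ Finset.range n, (μ (B i)) • Measure.dirac (condMean μ (B i))

/-- `{BL, BH}` is a nested intervals pair. -/
def IsNestedPair (BL BH : Set ℝ) : Prop :=
  ∃ w₁ b₁ b₂ w₂ : ℝ, w₁ < b₁ ∧ b₁ ≤ b₂ ∧ b₂ < w₂ ∧
    BL = Icc b₁ b₂ ∧ BH = Icc w₁ b₁ ∪ Icc b₂ w₂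

/-- A canonical representation of `G`: a deterministic representation of `G` in which every
element with nonempty interior is either an interval, or the outer member of a nested
intervals pair whose inner member has a lower index. -/
def IsCanonicalRep (μ : Measure ℝ) (n : ℕ) (B : ℕ → Set ℝ) (G : Measure ℝ) : Prop :=
  IsDetRepOf μ n B G ∧
    ∀ i < n, (interior (B i)).Nonempty →
      (∃ c d : ℝ, B i = Icc c d) ∨ ∃ L < i, IsNestedPair (B L) (B i)

/-- Index `i` is skipped: `B i` has empty interior. -/
def Skipped (B : ℕ → Set ℝ) (i : ℕ) : Prop := interior (B i) = ∅

/-- A skipped index `i` is harmlessly skipped if `A i ⊆ ⋃_{k > i} B k`. -/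
def HarmlesslySkipped (n : ℕ) (γ : ℕ → ℝ) (B : ℕ → Set ℝ) (i : ℕ) : Prop :=
  Icc (γ i) (γ (i+1)) ⊆ ⋃ k ∈ Finset.Ioo i n, B k

/-- Laminar representation property. -/
def IsLaminar (n : ℕ) (B : ℕ → Set ℝ) : Prop :=
  ∀ i < n, B i = closure ((convexHull ℝ (B i)) \ ⋃ j ∈ Finset.range i, convexHull ℝ (B j))

/-- Sender's ex ante payoff of a deterministic representation. -/
def payoff (μ : Measure ℝ) (n : ℕ) (v : ℕ → ℝ) (B : ℕ → Set ℝ) : ℝ :=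
  ∑ i ∈ Finset.range n, v i * (μ (B i)).toReal

/-- Conditional CDF of the prior with density `f` on the interval `[w₁, w₂]`. -/
def condCDF' (f : ℝ → ℝ) (w₁ w₂ x : ℝ) : ℝ :=
  (mcdf (densMeasure f) x - mcdf (densMeasure f) w₁) /
    (mcdf (densMeasure f) w₂ - mcdf (densMeasure f) w₁)

/-- `{zL, zH}` is a feasible bi-pooling support for the interval `[w₁, w₂]`. -/
def FeasibleSupport (f : ℝ → ℝ) (w₁ w₂ zL zH : ℝ) : Prop :=
  ∃ G : Measure ℝ, IsProbabilityMeasure G ∧ msupport G ⊆ {zL, zH} ∧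
    (∀ x ∈ Icc w₁ w₂, (∫ s in w₁..x, mcdf G s) ≤ ∫ s in w₁..x, condCDF' f w₁ w₂ s) ∧
    (∫ s in w₁..w₂, mcdf G s) = ∫ s in w₁..w₂, condCDF' f w₁ w₂ s

/-!
Choose a subinterval of `[0, 1]` with the mass and the mean of `B 0`: among all sets of that mass,
the moment of an interval sweeps continuously from the least to the greatest possible value. The
states of the other actions displaced from this interval have their means inside it, whereas the
vacated part of `B 0` has mass on both sides of it, so each displaced piece can be exchanged, with
the same mass and mean, for a mixture of the two vacated tails. Recursion on the complement of the
interval gives intervals `I i` such that `I i \ ⋃ j < i, I j` has the mass and mean of `B i`, and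
the closures of these differences are laminar.

For sets that cover `[0, 1]`, incentive compatibility says that (almost) no state of action `i` lies
above the cap `γ (i + 1)`. Exchanges preserve this: action `j > i` receives only states of action
`i`, which lie below the lower cap `γ (i + 1)`, and if the interval of action `i` reached beyond
`γ (i + 1)`, it would have no vacated upper tail, so nothing would be displaced.
-/

section Disjointed

theorem disjointed_eq_sdiff_biUnion_range {α : Type*} (I : ℕ → Set α) (i : ℕ) :
    disjointed I i = I i \ ⋃ j ∈ Finset.range i, I j := by
  rw [disjointed_apply, Nat.Iio_eq_range, Finset.sup_set_eq_biUnion]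

theorem biUnion_range_disjointed {α : Type*} (I : ℕ → Set α) (n : ℕ) :
    ⋃ i ∈ Finset.range n, disjointed I i = ⋃ i ∈ Finset.range n, I i := by
  induction n with
  | zero => simp
  | succ n ih =>
    simp only [Finset.range_add_one, Finset.set_biUnion_insert]
    rw [ih, disjointed_eq_sdiff_biUnion_range, sdiff_union_self]

theorem disjointed_add_one_eq_sdiff {α : Type*} (I : ℕ → Set α) (i : ℕ) :
    disjointed I (i + 1) = disjointed (fun j => I (j + 1)) i \ I 0 := by
  simp only [disjointed_eq_sdiff_biUnion_range, Finset.mem_range, sdiff_sdiff_left]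
  rw [biUnion_lt_succ', union_comm]
  rfl

theorem measure_frontier_disjointed_eq_zero {X : Type*} [TopologicalSpace X] [MeasurableSpace X]
    {μ : Measure X} {I : ℕ → Set X} (hI : ∀ i, μ (frontier (I i)) = 0) (i : ℕ) :
    μ (frontier (disjointed I i)) = 0 :=
  disjointedRec (p := fun s => μ (frontier s) = 0)
    (fun _ j hs => null_frontier_inter hs ((frontier_compl (I j)).symm ▸ hI j)) (hI i)

theorem measure_frontier_Icc_eq_zero (μ : Measure ℝ) [NullSingletonClass μ] (a b : ℝ) :
    μ (frontier (Icc a b)) = 0 := by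
  rcases le_or_gt a b with hab | hab
  · rw [frontier_Icc hab]
    exact (toFinite {a, b}).measure_zero μ
  · rw [Icc_eq_empty hab.not_ge, frontier_empty, measure_empty]

theorem isLaminar_closure_disjointed {I : ℕ → Set ℝ} (hclosed : ∀ i, IsClosed (I i))
    (hconvex : ∀ i, Convex ℝ (I i)) (n : ℕ) :
    IsLaminar n fun i => closure (disjointed I i) := by
  intro i _
  set J : ℕ → Set ℝ := fun i => convexHull ℝ (closure (disjointed I i))
  have disjointed_subset_J (j) : disjointed I j ⊆ J j :=
    subset_closure.trans (subset_convexHull ℝ _)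
  have J_subset (j) : J j ⊆ I j :=
    convexHull_min (closure_minimal (disjointed_subset I j) (hclosed j)) (hconvex j)
  have biUnion_J (m) : ⋃ j ∈ Finset.range m, J j = ⋃ j ∈ Finset.range m, I j :=
    (biUnion_mono subset_rfl fun j _ => J_subset j).antisymm <|
      (biUnion_range_disjointed I m).symm.trans_subset
        (biUnion_mono subset_rfl fun j _ => disjointed_subset_J j)
  change closure (disjointed I i) = closure (J i \ ⋃ j ∈ Finset.range i, J j)
  rw [biUnion_J, disjointed_eq_sdiff_biUnion_range]
  refine congrArg closure <| subset_antisymm (fun x hx => ⟨?_, hx.2⟩)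
    (sdiff_subset_sdiff_left (J_subset i))
  exact disjointed_subset_J i ((disjointed_eq_sdiff_biUnion_range I i).symm ▸ hx)

end Disjointed

/-- Two measures have the same total mass and the same first moment, i.e. they induce an action
with the same probability and the same posterior mean. The moments are Bochner integrals, hence `0`
for a measure without first moment. -/
structure EqMoments (μ ν : Measure ℝ) : Prop where
  mass : μ univ = ν univ
  moment : ∫ x, x ∂μ = ∫ x, x ∂ν

namespace EqMoments

theorem trans {μ ν τ : Measure ℝ} (h : EqMoments μ ν) (h' : EqMoments ν τ) : EqMoments μ τ :=
  ⟨h.mass.trans h'.mass, h.moment.trans h'.moment⟩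

theorem isFiniteMeasure {μ ν : Measure ℝ} [IsFiniteMeasure ν] (h : EqMoments μ ν) :
    IsFiniteMeasure μ :=
  ⟨h.mass.trans_lt (measure_lt_top ν univ)⟩

theorem measure_eq {μ : Measure ℝ} {s t : Set ℝ} (h : EqMoments (μ.restrict s) (μ.restrict t)) :
    μ s = μ t := by
  simpa only [Measure.restrict_apply_univ] using h.mass

theorem condMean_eq {μ : Measure ℝ} {s t : Set ℝ}
    (h : EqMoments (μ.restrict s) (μ.restrict t)) : condMean μ s = condMean μ t := by
  rw [condMean, condMean, h.moment, h.measure_eq]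

end EqMoments

section IntervalExistence

variable {ν τ ρ : Measure ℝ}

-- Among all ways of choosing mass `ν univ` out of `ν + τ`, the lowest states have the least moment.
theorem setIntegral_Iic_add_le_integral [IsFiniteMeasure ν] [IsFiniteMeasure τ]
    (hν : Integrable (fun x => x) ν)
    (hτ : Integrable (fun x => x) τ) {b : ℝ} (hb : (ν + τ).real (Iic b) = ν.real univ) :
    ∫ x in Iic b, x ∂(ν + τ) ≤ ∫ x, x ∂ν := by
  have mass_τ : τ.real (Iic b) = ν.real (Ioi b) := by
    rw [measureReal_add_apply, ← measureReal_add_measureReal_compl measurableSet_Iic,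
      compl_Iic] at hb
    exact add_left_cancel hb
  calc ∫ x in Iic b, x ∂(ν + τ)
      = ∫ x in Iic b, x ∂ν + ∫ x in Iic b, x ∂τ := by
        rw [Measure.restrict_add, integral_add_measure hν.restrict hτ.restrict]
    _ ≤ ∫ x in Iic b, x ∂ν + ∫ _ in Iic b, b ∂τ := by
        exact add_le_add le_rfl <| setIntegral_mono_on hτ.integrableOn (integrable_const b)
          measurableSet_Iic fun x hx => hx
    _ = ∫ x in Iic b, x ∂ν + ∫ _ in Ioi b, b ∂ν := by
        rw [setIntegral_const, setIntegral_const, mass_τ]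
    _ ≤ ∫ x in Iic b, x ∂ν + ∫ x in Ioi b, x ∂ν := by
        exact add_le_add le_rfl <| setIntegral_mono_on (integrable_const b) hν.integrableOn
          measurableSet_Ioi fun x hx => le_of_lt hx
    _ = ∫ x, x ∂ν := by rw [← compl_Iic, integral_add_compl measurableSet_Iic hν]

theorem exists_measureReal_Iic_eq [IsFiniteMeasure ρ] [NullSingletonClass ρ] {l u : ℝ} (hlu : l ≤ u)
    (hρ : ∀ᵐ x ∂ρ, x ∈ Icc l u) {s : ℝ} (hs : s ∈ Icc 0 (ρ.real univ)) :
    ∃ x ∈ Icc l u, ρ.real (Iic x) = s := by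
  have continuousOn_cdf : ContinuousOn (fun x => ρ.real (Iic x)) (Icc l u) := by
    have := (integrable_const (1 : ℝ)).integrableOn (s := Iic u) (μ := ρ)
    simpa only [setIntegral_const, smul_eq_mul, mul_one] using
      this.continuousOn_Iic_primitive_Iic.mono Icc_subset_Iic_self
  have cdf_l : ρ.real (Iic l) = 0 := by
    have : Iic l =ᵐ[ρ] (∅ : Set ℝ) := by
      filter_upwards [hρ, measure_eq_zero_iff_ae_notMem.1 (measure_singleton l)] with x hx hxl
      exact eq_false fun h : x ≤ l => hxl (le_antisymm h hx.1)
    rw [measureReal_congr this, measureReal_empty]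
  have cdf_u : ρ.real (Iic u) = ρ.real univ :=
    measureReal_congr <| by
      filter_upwards [hρ] with x hx
      exact propext ⟨fun _ => trivial, fun _ => hx.2⟩
  exact intermediate_value_Icc hlu continuousOn_cdf (by simpa only [cdf_l, cdf_u] using hs)

theorem measureReal_Ioc_eq_sub [IsFiniteMeasure ρ] {x y : ℝ} (hxy : x ≤ y) :
    ρ.real (Ioc x y) = ρ.real (Iic y) - ρ.real (Iic x) := by
  rw [← Iic_sdiff_Iic, measureReal_sdiff (Iic_subset_Iic.2 hxy) measurableSet_Iic]

theorem setIntegral_Ioc_eq_sub (hρ : Integrable (fun x => x) ρ) {x y : ℝ} (hxy : x ≤ y) :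
    ∫ t in Ioc x y, t ∂ρ = ∫ t in Iic y, t ∂ρ - ∫ t in Iic x, t ∂ρ := by
  rw [intervalIntegral.integral_Iic_sub_Iic hρ.integrableOn hρ.integrableOn,
    intervalIntegral.integral_of_le hxy]

theorem dist_setIntegral_Iic_le [IsFiniteMeasure ρ] {C : ℝ} (hρ : ∀ᵐ t ∂ρ, ‖t‖ ≤ C) (x y : ℝ) :
    dist (∫ t in Iic x, t ∂ρ) (∫ t in Iic y, t ∂ρ) ≤
      C * dist (ρ.real (Iic x)) (ρ.real (Iic y)) := by
  wlog hxy : x ≤ y generalizing x y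
  · rw [dist_comm, dist_comm (ρ.real _)]
    exact this y x (le_of_not_ge hxy)
  have hint : Integrable (fun t => t) ρ := .of_bound (by fun_prop) C hρ
  have hmono : 0 ≤ ρ.real (Iic y) - ρ.real (Iic x) :=
    sub_nonneg.2 (measureReal_mono (Iic_subset_Iic.2 hxy))
  rw [dist_comm, dist_comm (ρ.real _), Real.dist_eq, Real.dist_eq, abs_of_nonneg hmono,
    ← setIntegral_Ioc_eq_sub hint hxy, ← measureReal_Ioc_eq_sub hxy]
  exact norm_setIntegral_le_of_norm_le_const_ae (measure_lt_top ρ _) (ae_restrict_of_ae hρ)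

theorem exists_quantile [IsFiniteMeasure ρ] [NullSingletonClass ρ] {l u : ℝ} (hlu : l ≤ u)
    (hρ : ∀ᵐ x ∂ρ, x ∈ Icc l u) : ∃ q : ℝ → ℝ,
      (∀ s ∈ Icc 0 (ρ.real univ), q s ∈ Icc l u ∧ ρ.real (Iic (q s)) = s) ∧
      ContinuousOn (fun s => ∫ x in Iic (q s), x ∂ρ) (Icc 0 (ρ.real univ)) := by
  choose! q q_mem cdf_q using fun s => exists_measureReal_Iic_eq (s := s) hlu hρ
  refine ⟨q, fun s hs => ⟨q_mem s hs, cdf_q s hs⟩, ?_⟩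
  have norm_le : ∀ᵐ x ∂ρ, ‖x‖ ≤ max |l| |u| := hρ.mono fun x hx => abs_le_max_abs_abs hx.1 hx.2
  refine (LipschitzOnWith.of_dist_le_mul (K := ⟨max |l| |u|, by positivity⟩)
    fun s hs t ht => ?_).continuousOn
  have := dist_setIntegral_Iic_le norm_le (q s) (q t)
  rwa [cdf_q s hs, cdf_q t ht] at this

theorem setIntegral_eq_integral_of_measureReal_eq {α E : Type*} [MeasurableSpace α]
    [NormedAddCommGroup E] [NormedSpace ℝ E] {μ : Measure α} [IsFiniteMeasure μ] {s : Set α}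
    (hs : MeasurableSet s) (h : μ.real s = μ.real univ) {f : α → E} :
    ∫ x in s, f x ∂μ = ∫ x, f x ∂μ := by
  rw [measureReal_eq_measureReal_iff, ← ae_eq_univ_iff_measure_eq hs.nullMeasurableSet] at h
  rw [setIntegral_congr_set h, setIntegral_univ]

theorem exists_window_sub_eq {H : ℝ → ℝ} {m M t : ℝ} (hH : ContinuousOn H (Icc 0 M))
    (hm : m ∈ Icc 0 M) (low : H m - H 0 ≤ t) (high : t ≤ H M - H (M - m)) :
    ∃ s ∈ Icc 0 (M - m), H (s + m) - H s = t := by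
  have continuousOn_window : ContinuousOn (fun s => H (s + m) - H s) (Icc 0 (M - m)) :=
    (hH.comp (by fun_prop) fun s hs => ⟨add_nonneg hs.1 hm.1, le_sub_iff_add_le.1 hs.2⟩).sub
      (hH.mono (Icc_subset_Icc_right (sub_le_self M hm.1)))
  refine intermediate_value_Icc (sub_nonneg.2 hm.2) continuousOn_window ⟨?_, ?_⟩
  · rwa [zero_add]
  · rwa [sub_add_cancel]

theorem exists_Icc_setIntegral_eq [IsFiniteMeasure ρ] [NullSingletonClass ρ] {l u : ℝ}
    (hlu : l ≤ u) (hρu : ∀ᵐ x ∂ρ, x ∈ Icc l u) {m t : ℝ} (hm : m ∈ Icc 0 (ρ.real univ))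
    (low : ∀ b, ρ.real (Iic b) = m → ∫ x in Iic b, x ∂ρ ≤ t)
    (high : ∀ a, ρ.real (Ioi a) = m → t ≤ ∫ x in Ioi a, x ∂ρ) :
    ∃ a b, a ≤ b ∧ Icc a b ⊆ Icc l u ∧ ρ.real (Icc a b) = m ∧ ∫ x in Icc a b, x ∂ρ = t := by
  have hρ : Integrable (fun x => x) ρ := .of_mem_Icc l u (by fun_prop) hρu
  obtain ⟨q, hq, continuousOn_H⟩ := exists_quantile hlu hρu
  set M := ρ.real univ
  set H : ℝ → ℝ := fun s => ∫ x in Iic (q s), x ∂ρ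
  have H_zero : H 0 = 0 :=
    setIntegral_measure_zero _ <| (measureReal_eq_zero_iff).1 (hq 0 ⟨le_rfl, hm.1.trans hm.2⟩).2
  have H_total : H M = ∫ x, x ∂ρ :=
    setIntegral_eq_integral_of_measureReal_eq measurableSet_Iic (hq M ⟨hm.1.trans hm.2, le_rfl⟩).2
  have window_low : H m - H 0 ≤ t := by
    rw [H_zero, sub_zero]
    exact low (q m) (hq m hm).2
  have window_high : t ≤ H M - H (M - m) := by
    have cdf_a := (hq (M - m) ⟨sub_nonneg.2 hm.2, sub_le_self M hm.1⟩).2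
    rw [H_total, ← integral_add_compl measurableSet_Iic hρ, add_sub_cancel_left, compl_Iic]
    refine high (q (M - m)) ?_
    rw [← compl_Iic, measureReal_compl measurableSet_Iic, cdf_a]
    exact sub_sub_cancel M m
  obtain ⟨s, hs, moment⟩ := exists_window_sub_eq continuousOn_H hm window_low window_high
  obtain ⟨a_mem, cdf_a⟩ := hq s ⟨hs.1, hs.2.trans (sub_le_self M hm.1)⟩
  obtain ⟨b_mem, cdf_b⟩ := hq (s + m) ⟨add_nonneg hs.1 hm.1, le_sub_iff_add_le.1 hs.2⟩
  have hab : q s ≤ q (s + m) := by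
    rcases hm.1.eq_or_lt with rfl | hm
    · rw [add_zero]
    · exact le_of_not_ge fun hba => by
        linarith [measureReal_mono (μ := ρ) (Iic_subset_Iic.2 hba)]
  refine ⟨q s, q (s + m), hab, Icc_subset_Icc a_mem.1 b_mem.2, ?_, ?_⟩
  · rw [← measureReal_congr Ioc_ae_eq_Icc, measureReal_Ioc_eq_sub hab, cdf_a, cdf_b,
      add_sub_cancel_left]
  · rwa [← setIntegral_congr_set Ioc_ae_eq_Icc, setIntegral_Ioc_eq_sub hρ hab]

theorem exists_Icc_eqMoments [IsFiniteMeasure ν] [IsFiniteMeasure τ] [NullSingletonClass (ν + τ)]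
    {l u : ℝ} (hlu : l ≤ u) (hνu : ∀ᵐ x ∂ν, x ∈ Icc l u) (hτu : ∀ᵐ x ∂τ, x ∈ Icc l u) :
    ∃ a b, a ≤ b ∧ Icc a b ⊆ Icc l u ∧ EqMoments ((ν + τ).restrict (Icc a b)) ν := by
  have hν : Integrable (fun x => x) ν := .of_mem_Icc l u (by fun_prop) hνu
  have hτ : Integrable (fun x => x) τ := .of_mem_Icc l u (by fun_prop) hτu
  have total_mass : (ν + τ).real univ = ν.real univ + τ.real univ := measureReal_add_apply
  have upper_tail (a : ℝ) (ha : (ν + τ).real (Ioi a) = ν.real univ) :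
      ∫ x, x ∂ν ≤ ∫ x in Ioi a, x ∂(ν + τ) := by
    have mass_Iic : (τ + ν).real (Iic a) = τ.real univ := by
      rw [← measureReal_add_measureReal_compl (measurableSet_Iic (a := a)), compl_Iic, ha, add_comm,
        add_comm ν τ] at total_mass
      exact add_left_cancel total_mass
    have moment_Iic := setIntegral_Iic_add_le_integral hτ hν mass_Iic
    have total_moment := integral_add_compl measurableSet_Iic (hν.add_measure hτ) (s := Iic a)
    rw [compl_Iic, integral_add_measure hν hτ, add_comm ν τ] at total_moment
    rw [add_comm ν τ]
    linarith
  obtain ⟨a, b, hab, hsub, mass, moment⟩ := exists_Icc_setIntegral_eq hlu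
    (ae_add_measure_iff.2 ⟨hνu, hτu⟩)
    ⟨measureReal_nonneg, total_mass ▸ le_add_of_nonneg_right measureReal_nonneg⟩
    (fun b => setIntegral_Iic_add_le_integral hν hτ) upper_tail
  refine ⟨a, b, hab, hsub, ?_, moment⟩
  rwa [Measure.restrict_apply_univ, ← measureReal_eq_measureReal_iff]

end IntervalExistence

section Redistribution

theorem restrict_finsetSum {α ι : Type*} [MeasurableSpace α] (s : Finset ι) (μ : ι → Measure α)
    (t : Set α) : (∑ i ∈ s, μ i).restrict t = ∑ i ∈ s, (μ i).restrict t := by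
  simpa only [Measure.restrictₗ_apply] using map_sum (Measure.restrictₗ t) μ s

theorem setIntegral_lt_setIntegral {α : Type*} [MeasurableSpace α] {μ : Measure α} {s : Set α}
    {f g : α → ℝ} (hs : MeasurableSet s) (hμs : μ s ≠ 0) (hf : IntegrableOn f s μ)
    (hg : IntegrableOn g s μ) (hfg : ∀ x ∈ s, f x < g x) :
    ∫ x in s, f x ∂μ < ∫ x in s, g x ∂μ := by
  rw [← sub_pos, ← integral_sub hg hf, setIntegral_pos_iff_support_of_nonneg_ae
    (ae_restrict_of_forall_mem hs fun x hx => sub_nonneg.2 (hfg x hx).le) (hg.sub hf)]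
  have support_supset : s ⊆ Function.support fun x => g x - f x :=
    fun x hx => (sub_pos.2 (hfg x hx)).ne'
  rwa [inter_eq_right.2 support_supset, pos_iff_ne_zero]

theorem setIntegral_Icc_mem_Icc {μ : Measure ℝ} [IsFiniteMeasure μ]
    (hμ : Integrable (fun x => x) μ) (a b : ℝ) :
    ∫ x in Icc a b, x ∂μ ∈ Icc (a * μ.real (Icc a b)) (b * μ.real (Icc a b)) := by
  have const (c : ℝ) : c * μ.real (Icc a b) = ∫ _ in Icc a b, c ∂μ := by
    rw [setIntegral_const, smul_eq_mul, mul_comm]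
  rw [const, const]
  exact ⟨setIntegral_mono_on (integrable_const a) hμ.integrableOn measurableSet_Icc
      fun x hx => hx.1,
    setIntegral_mono_on hμ.integrableOn (integrable_const b) measurableSet_Icc fun x hx => hx.2⟩

theorem setIntegral_Iio_lt {μ : Measure ℝ} [IsFiniteMeasure μ] (hμ : Integrable (fun x => x) μ)
    {a : ℝ} (ha : μ (Iio a) ≠ 0) : ∫ x in Iio a, x ∂μ < a * μ.real (Iio a) := by
  rw [mul_comm, ← smul_eq_mul, ← setIntegral_const]
  exact setIntegral_lt_setIntegral measurableSet_Iio ha hμ.integrableOn (integrable_const a)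
    fun x hx => hx

theorem lt_setIntegral_Ioi {μ : Measure ℝ} [IsFiniteMeasure μ] (hμ : Integrable (fun x => x) μ)
    {b : ℝ} (hb : μ (Ioi b) ≠ 0) : b * μ.real (Ioi b) < ∫ x in Ioi b, x ∂μ := by
  rw [mul_comm, ← smul_eq_mul, ← setIntegral_const]
  exact setIntegral_lt_setIntegral measurableSet_Ioi hb (integrable_const b) hμ.integrableOn
    fun x hx => hx

theorem restrict_compl_Icc {μ : Measure ℝ} {a b : ℝ} (hab : a ≤ b) :
    μ.restrict (Icc a b)ᶜ = μ.restrict (Iio a) + μ.restrict (Ioi b) := by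
  rw [← Measure.restrict_union _ measurableSet_Ioi]
  · congr 1
    ext x
    simp only [mem_compl_iff, mem_Icc, mem_union, mem_Iio, mem_Ioi]
    grind
  · exact Set.disjoint_left.2 fun x hxa hxb => (hab.trans_lt hxb).not_gt hxa

namespace EqMoments

variable {μ μ' ν ν' ξ η σ : Measure ℝ}

theorem add_right (hμ : Integrable (fun x => x) μ) (hν : Integrable (fun x => x) ν)
    (hσ : Integrable (fun x => x) σ) (h : EqMoments μ ν) : EqMoments (μ + σ) (ν + σ) where
  mass := by rw [Measure.add_apply, Measure.add_apply, h.mass]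
  moment := by rw [integral_add_measure hμ hσ, integral_add_measure hν hσ, h.moment]

theorem of_add_left [IsFiniteMeasure σ] (hσ : Integrable (fun x => x) σ)
    (hμ : Integrable (fun x => x) μ) (hν : Integrable (fun x => x) ν)
    (h : EqMoments (σ + μ) (σ + ν)) : EqMoments μ ν where
  mass := (ENNReal.add_right_inj (measure_ne_top σ univ)).1 h.mass
  moment := by
    have := h.moment
    rw [integral_add_measure hσ hμ, integral_add_measure hσ hν] at this
    exact add_left_cancel this

theorem sum {ι : Type*} {s : Finset ι} {μ ν : ι → Measure ℝ}
    (hμ : ∀ i ∈ s, Integrable (fun x => x) (μ i)) (hν : ∀ i ∈ s, Integrable (fun x => x) (ν i))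
    (h : ∀ i ∈ s, EqMoments (μ i) (ν i)) : EqMoments (∑ i ∈ s, μ i) (∑ i ∈ s, ν i) where
  mass := by
    simp only [Measure.coe_finsetSum, Finset.sum_apply]
    exact Finset.sum_congr rfl fun i hi => (h i hi).mass
  moment := by
    rw [integral_finsetSum_measure hμ, integral_finsetSum_measure hν]
    exact Finset.sum_congr rfl fun i hi => (h i hi).moment

theorem measureReal_univ_eq (h : EqMoments μ ν) : μ.real univ = ν.real univ :=
  congrArg ENNReal.toReal h.mass

theorem smul_add_smul_iff [IsFiniteMeasure ξ] [IsFiniteMeasure η] [IsFiniteMeasure σ]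
    (hξ : Integrable (fun x => x) ξ) (hη : Integrable (fun x => x) η) (A B : NNReal) :
    EqMoments (A • ξ + B • η) σ ↔ A * ξ.real univ + B * η.real univ = σ.real univ ∧
      A * ∫ x, x ∂ξ + B * ∫ x, x ∂η = ∫ x, x ∂σ := by
  have mass : (A • ξ + B • η).real univ = A * ξ.real univ + B * η.real univ := by
    rw [measureReal_add_apply, measureReal_nnreal_smul_apply, measureReal_nnreal_smul_apply]
  have moment : ∫ x, x ∂(A • ξ + B • η) = A * ∫ x, x ∂ξ + B * ∫ x, x ∂η := by
    rw [integral_add_measure hξ.smul_measure_nnreal hη.smul_measure_nnreal,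
      integral_smul_nnreal_measure, integral_smul_nnreal_measure]
    rfl
  rw [← mass, ← moment, measureReal_eq_measureReal_iff]
  exact ⟨fun h => ⟨h.1, h.2⟩, fun h => ⟨h.1, h.2⟩⟩

end EqMoments

variable {l r lx rx a b : ℝ}

theorem det_pos_of_means_lt (hl : 0 < l) (hr : 0 < r) (hab : a ≤ b) (hlx : lx < a * l)
    (hrx : b * r < rx) : 0 < l * rx - lx * r :=
  calc 0 ≤ (b - a) * (l * r) := mul_nonneg (sub_nonneg.2 hab) (mul_pos hl hr).le
    _ = l * (b * r) - a * l * r := by ring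
    _ < l * rx - lx * r := by gcongr

theorem exists_nonneg_combination {d e : ℝ} (hl : 0 < l) (hr : 0 < r) (hab : a ≤ b)
    (hlx : lx < a * l) (hrx : b * r < rx) (hd : 0 ≤ d) (he : e ∈ Icc (a * d) (b * d)) :
    ∃ A B : NNReal, A * l + B * r = d ∧ A * lx + B * rx = e := by
  have hΔ := det_pos_of_means_lt hl hr hab hlx hrx
  have hA : 0 ≤ d * rx - e * r := by
    nlinarith [mul_le_mul_of_nonneg_left hrx.le hd, mul_le_mul_of_nonneg_right he.2 hr.le]
  have hB : 0 ≤ l * e - lx * d := by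
    nlinarith [mul_le_mul_of_nonneg_left hlx.le hd, mul_le_mul_of_nonneg_right he.1 hl.le]
  refine ⟨⟨(d * rx - e * r) / (l * rx - lx * r), div_nonneg hA hΔ.le⟩,
    ⟨(l * e - lx * d) / (l * rx - lx * r), div_nonneg hB hΔ.le⟩, ?_, ?_⟩
  all_goals
    change _ / _ * _ + _ / _ * _ = _
    rw [div_mul_eq_mul_div, div_mul_eq_mul_div, ← add_div, div_eq_iff hΔ.ne']
    ring

theorem eq_one_of_combination_eq {A B : ℝ} (hΔ : 0 < l * rx - lx * r)
    (hmass : A * l + B * r = l + r) (hmoment : A * lx + B * rx = lx + rx) : A = 1 ∧ B = 1 := by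
  have hA : (A - 1) * (l * rx - lx * r) = 0 := by linear_combination rx * hmass - r * hmoment
  have hB : (B - 1) * (l * rx - lx * r) = 0 := by linear_combination l * hmoment - lx * hmass
  exact ⟨sub_eq_zero.1 ((mul_eq_zero_iff_right hΔ.ne').1 hA),
    sub_eq_zero.1 ((mul_eq_zero_iff_right hΔ.ne').1 hB)⟩

theorem exists_shares {ι : Type*} {s : Finset ι} {σ : ι → Measure ℝ} {ξ η : Measure ℝ}
    [∀ i, IsFiniteMeasure (σ i)] [IsFiniteMeasure ξ] [IsFiniteMeasure η]
    (hσ : ∀ i, Integrable (fun x => x) (σ i))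
    (hξ : Integrable (fun x => x) ξ) (hη : Integrable (fun x => x) η)
    (hab : a ≤ b) (hξa : ∫ x, x ∂ξ < a * ξ.real univ) (hηb : b * η.real univ < ∫ x, x ∂η)
    (hσab : ∀ i, ∫ x, x ∂σ i ∈ Icc (a * (σ i).real univ) (b * (σ i).real univ))
    (h : EqMoments (∑ i ∈ s, σ i) (ξ + η)) :
    ∃ A B : ι → NNReal, ∑ i ∈ s, A i = 1 ∧ ∑ i ∈ s, B i = 1 ∧
      ∀ i, EqMoments (A i • ξ + B i • η) (σ i) := by
  have : NeZero ξ := ⟨by rintro rfl; simp at hξa⟩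
  have : NeZero η := ⟨by rintro rfl; simp at hηb⟩
  have hξ0 : 0 < ξ.real univ := measureReal_univ_pos
  have hη0 : 0 < η.real univ := measureReal_univ_pos
  choose A B mass moment using fun i =>
    exists_nonneg_combination hξ0 hη0 hab hξa hηb measureReal_nonneg (hσab i)
  have shares (i) : EqMoments (A i • ξ + B i • η) (σ i) :=
    (EqMoments.smul_add_smul_iff hξ hη _ _).2 ⟨mass i, moment i⟩
  have total : EqMoments ((∑ i ∈ s, A i) • ξ + (∑ i ∈ s, B i) • η) (ξ + η) := by
    rw [Finset.sum_smul, Finset.sum_smul, ← Finset.sum_add_distrib]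
    exact (EqMoments.sum (fun i _ => hξ.smul_measure_nnreal.add_measure hη.smul_measure_nnreal)
      (fun i _ => hσ i) fun i _ => shares i).trans h
  rw [EqMoments.smul_add_smul_iff hξ hη, measureReal_add_apply, integral_add_measure hξ hη] at total
  obtain ⟨sum_A, sum_B⟩ := eq_one_of_combination_eq
    (det_pos_of_means_lt hξ0 hη0 hab hξa hηb) total.1 total.2
  exact ⟨A, B, NNReal.coe_eq_one.1 sum_A, NNReal.coe_eq_one.1 sum_B, shares⟩

theorem eqMoments_restrict_compl {ν τ : Measure ℝ} [IsFiniteMeasure ν] {D : Set ℝ}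
    (hD : MeasurableSet D) (hν : Integrable (fun x => x) ν) (hτ : Integrable (fun x => x) τ)
    (h : EqMoments ((ν + τ).restrict D) ν) : EqMoments (τ.restrict D) (ν.restrict Dᶜ) := by
  rw [Measure.restrict_add] at h
  nth_rw 2 [← Measure.restrict_add_restrict_compl (μ := ν) hD] at h
  exact h.of_add_left hν.restrict hτ.restrict hν.restrict

-- The mean of `τ` on `[a, b]` lies in `[a, b]`, so the displaced part of `ν`, which has the same
-- mean, cannot sit on one side of `[a, b]` only.
theorem null_or_tails_ne_zero {ν τ : Measure ℝ} [IsFiniteMeasure ν] [IsFiniteMeasure τ]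
    (hab : a ≤ b) (hν : Integrable (fun x => x) ν) (hτ : Integrable (fun x => x) τ)
    (h : EqMoments (τ.restrict (Icc a b)) (ν.restrict (Icc a b)ᶜ)) :
    τ (Icc a b) = 0 ∨ ν (Iio a) ≠ 0 ∧ ν (Ioi b) ≠ 0 := by
  have mass : τ.real (Icc a b) = ν.real (Iio a) + ν.real (Ioi b) := by
    rw [← measureReal_restrict_apply_univ, h.measureReal_univ_eq, restrict_compl_Icc hab,
      measureReal_add_apply, measureReal_restrict_apply_univ, measureReal_restrict_apply_univ]
  have moment : ∫ x in Icc a b, x ∂τ = ∫ x in Iio a, x ∂ν + ∫ x in Ioi b, x ∂ν := by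
    rw [h.moment, restrict_compl_Icc hab, integral_add_measure hν.restrict hν.restrict]
  have mean_mem := setIntegral_Icc_mem_Icc hτ a b
  rw [mass, moment] at mean_mem
  by_cases ha : ν (Iio a) = 0 <;> by_cases hb : ν (Ioi b) = 0
  · left
    rw [← measureReal_eq_zero_iff, mass, measureReal_def, measureReal_def, ha, hb,
      ENNReal.toReal_zero, add_zero]
  · have := lt_setIntegral_Ioi hν hb
    rw [setIntegral_measure_zero _ ha, measureReal_def, ha, ENNReal.toReal_zero] at mean_mem
    linarith [mean_mem.2]
  · have := setIntegral_Iio_lt hν ha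
    rw [setIntegral_measure_zero _ hb, measureReal_def ν (Ioi b), hb, ENNReal.toReal_zero]
      at mean_mem
    linarith [mean_mem.1]
  · exact Or.inr ⟨ha, hb⟩

theorem measure_Icc_inter_Ioi_eq_zero {ν τ : Measure ℝ} [IsFiniteMeasure ν] [IsFiniteMeasure τ]
    {c : ℝ} (hab : a ≤ b) (hν : Integrable (fun x => x) ν) (hτ : Integrable (fun x => x) τ)
    (h : EqMoments ((ν + τ).restrict (Icc a b)) ν) (hc : ν (Ioi c) = 0) :
    (ν + τ) (Icc a b ∩ Ioi c) = 0 := by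
  rcases null_or_tails_ne_zero hab hν hτ (eqMoments_restrict_compl measurableSet_Icc hν hτ h)
    with null | ⟨-, upper_tail⟩
  · rw [Measure.add_apply, measure_mono_null inter_subset_right hc,
      measure_mono_null inter_subset_left null, add_zero]
  · have hbc : b < c :=
      lt_of_not_ge fun hcb => upper_tail (measure_mono_null (Ioi_subset_Ioi hcb) hc)
    have : Icc a b ∩ Ioi c = ∅ :=
      eq_empty_of_forall_notMem fun x hx => (hx.1.2.trans_lt hbc).not_gt hx.2
    rw [this, measure_empty]

theorem exists_redistribution {ι : Type*} {s : Finset ι} {ν : Measure ℝ} {τ : ι → Measure ℝ}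
    [IsFiniteMeasure ν] [∀ i, IsFiniteMeasure (τ i)] (hab : a ≤ b)
    (hν : Integrable (fun x => x) ν) (hτ : ∀ i, Integrable (fun x => x) (τ i))
    (h : EqMoments ((ν + ∑ i ∈ s, τ i).restrict (Icc a b)) ν) :
    ∃ τ' : ι → Measure ℝ, ∑ i ∈ s, τ' i = (ν + ∑ i ∈ s, τ i).restrict (Icc a b)ᶜ ∧
      ∀ i, EqMoments (τ' i) (τ i) ∧ τ' i ≪ ν + τ i := by
  have hτs : Integrable (fun x => x) (∑ i ∈ s, τ i) :=
    integrable_finsetSum_measure.2 fun i _ => hτ i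
  have displaced := eqMoments_restrict_compl measurableSet_Icc hν hτs h
  rcases null_or_tails_ne_zero hab hν hτs displaced with null | ⟨ha, hb⟩
  · have hνD : ν.restrict (Icc a b)ᶜ = 0 := by
      rw [← Measure.measure_univ_eq_zero, ← displaced.mass, Measure.restrict_apply_univ, null]
    refine ⟨τ, ?_, fun i => ⟨⟨rfl, rfl⟩, ?_⟩⟩
    · rw [Measure.restrict_add, hνD, zero_add, Measure.restrict_eq_self_of_ae_mem]
      exact measure_eq_zero_iff_ae_notMem.1 null
    · rw [add_comm]
      exact Measure.AbsolutelyContinuous.rfl.add_right ν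
  -- Otherwise every displaced `τ i` can be replaced by a mixture of the two vacated tails of `ν`.
  rw [restrict_finsetSum, restrict_compl_Icc hab] at displaced
  obtain ⟨A, B, sum_A, sum_B, shares⟩ := exists_shares (fun i => (hτ i).restrict) hν.restrict
    hν.restrict hab (by simpa only [measureReal_restrict_apply_univ] using setIntegral_Iio_lt hν ha)
    (by simpa only [measureReal_restrict_apply_univ] using lt_setIntegral_Ioi hν hb)
    (fun i => by
      simpa only [measureReal_restrict_apply_univ] using setIntegral_Icc_mem_Icc (hτ i) a b)
    displaced
  refine ⟨fun i => (A i • ν.restrict (Iio a) + B i • ν.restrict (Ioi b)) +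
    (τ i).restrict (Icc a b)ᶜ, ?_, fun i => ⟨?_, ?_⟩⟩
  · rw [Finset.sum_add_distrib, Finset.sum_add_distrib, ← Finset.sum_smul, ← Finset.sum_smul,
      sum_A, sum_B, one_smul, one_smul, ← restrict_compl_Icc hab, ← restrict_finsetSum,
      Measure.restrict_add]
  · have := (shares i).add_right
      (hν.restrict.smul_measure_nnreal.add_measure hν.restrict.smul_measure_nnreal) (hτ i).restrict
      ((hτ i).restrict (s := (Icc a b)ᶜ))
    rwa [Measure.restrict_add_restrict_compl measurableSet_Icc] at this
  · have tail_ac (t : Set ℝ) (C : NNReal) : C • ν.restrict t ≪ ν + τ i :=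
      (Measure.absolutelyContinuous_restrict.smul_left C).add_right (τ i)
    refine ((tail_ac _ _).add_left (tail_ac _ _)).add_left ?_
    rw [add_comm]
    exact Measure.absolutelyContinuous_restrict.add_right ν

end Redistribution

section Intervals

variable {N : ℕ} {l u : ℝ} {c : ℕ → ℝ} {ν : ℕ → Measure ℝ} [∀ i, IsFiniteMeasure (ν i)]
  [∀ i, NullSingletonClass (ν i)]

theorem exists_first_Icc (hlu : l ≤ u) (hc : MonotoneOn c (Iio (N + 1)))
    (hνu : ∀ i, ∀ᵐ x ∂ν i, x ∈ Icc l u) (hνc : ∀ i < N + 1, ν i (Ioi (c i)) = 0) :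
    ∃ a b, Icc a b ⊆ Icc l u ∧
      EqMoments ((∑ i ∈ Finset.range (N + 1), ν i).restrict (Icc a b)) (ν 0) ∧
      (∑ i ∈ Finset.range (N + 1), ν i) (Icc a b ∩ Ioi (c 0)) = 0 ∧
      ∃ τ : ℕ → Measure ℝ, ∑ i ∈ Finset.range N, τ i =
          (∑ i ∈ Finset.range (N + 1), ν i).restrict (Icc a b)ᶜ ∧
        ∀ i, EqMoments (τ i) (ν (i + 1)) ∧ NullSingletonClass (τ i) ∧
          (∀ᵐ x ∂τ i, x ∈ Icc l u) ∧ (i < N → τ i (Ioi (c (i + 1))) = 0) := by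
  rw [Finset.sum_range_succ', add_comm]
  have hν (i) : Integrable (fun x => x) (ν i) := .of_mem_Icc l u (by fun_prop) (hνu i)
  have hσ : Integrable (fun x => x) (∑ i ∈ Finset.range N, ν (i + 1)) :=
    integrable_finsetSum_measure.2 fun i _ => hν (i + 1)
  have hσu : ∀ᵐ x ∂(∑ i ∈ Finset.range N, ν (i + 1)), x ∈ Icc l u := by
    rw [ae_iff, Measure.coe_finsetSum, Finset.sum_apply]
    exact Finset.sum_eq_zero fun i _ => ae_iff.1 (hνu (i + 1))
  have : NullSingletonClass (ν 0 + ∑ i ∈ Finset.range N, ν (i + 1)) := ⟨fun x => by simp⟩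
  obtain ⟨a, b, hab, hsub, first⟩ := exists_Icc_eqMoments hlu (hνu 0) hσu
  obtain ⟨τ, sum_τ, hτ⟩ := exists_redistribution hab (hν 0) (fun i => hν (i + 1)) first
  refine ⟨a, b, hsub, first, measure_Icc_inter_Ioi_eq_zero hab (hν 0) hσ first
    (hνc 0 N.succ_pos), τ, sum_τ, fun i => ⟨(hτ i).1, ⟨fun x => (hτ i).2 (by simp)⟩,
    (hτ i).2.ae_le (ae_add_measure_iff.2 ⟨hνu 0, hνu (i + 1)⟩), fun hi => (hτ i).2 ?_⟩⟩
  have cap_le : c 0 ≤ c (i + 1) := hc N.succ_pos (Nat.succ_lt_succ hi) (Nat.zero_le _)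
  rw [Measure.add_apply, hνc (i + 1) (Nat.succ_lt_succ hi), add_zero]
  exact measure_mono_null (Ioi_subset_Ioi cap_le) (hνc 0 N.succ_pos)

theorem exists_Icc_family (hlu : l ≤ u) (hc : MonotoneOn c (Iio N))
    (hνu : ∀ i, ∀ᵐ x ∂ν i, x ∈ Icc l u) (hνc : ∀ i < N, ν i (Ioi (c i)) = 0) :
    ∃ a b : ℕ → ℝ, (∀ i, Icc (a i) (b i) ⊆ Icc l u) ∧
      (∀ᵐ x ∂(∑ i ∈ Finset.range N, ν i), ∃ i < N, x ∈ Icc (a i) (b i)) ∧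
      ∀ i < N, EqMoments ((∑ i ∈ Finset.range N, ν i).restrict
          (disjointed (fun i => Icc (a i) (b i)) i)) (ν i) ∧
        (∑ i ∈ Finset.range N, ν i) (disjointed (fun i => Icc (a i) (b i)) i ∩ Ioi (c i)) = 0 := by
  induction N generalizing c ν with
  | zero => exact ⟨fun _ => 1, fun _ => 0, by simp, by simp, by simp⟩
  | succ N ih =>
    obtain ⟨a₀, b₀, hsub₀, first, cap₀, τ, sum_τ, hτ⟩ := exists_first_Icc hlu hc hνu hνc
    set ρ := ∑ i ∈ Finset.range (N + 1), ν i
    have finite_τ (i) : IsFiniteMeasure (τ i) := (hτ i).1.isFiniteMeasure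
    have atomless_τ (i) : NullSingletonClass (τ i) := (hτ i).2.1
    have hc' : MonotoneOn (fun i => c (i + 1)) (Iio N) := fun i hi j hj hij =>
      hc (Nat.succ_lt_succ hi) (Nat.succ_lt_succ hj) (Nat.succ_le_succ hij)
    obtain ⟨a, b, hsub, cover, hI⟩ := ih hc' (fun i => (hτ i).2.2.1) fun i => (hτ i).2.2.2
    rw [sum_τ] at cover hI
    rw [ae_restrict_iff' measurableSet_Icc.compl] at cover
    have measurable_disjointed (i) : MeasurableSet (disjointed (fun i => Icc (a i) (b i)) i) :=
      .disjointed (fun _ => measurableSet_Icc) i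
    refine ⟨fun i => i.casesOn a₀ a, fun i => i.casesOn b₀ b, ?_, ?_, ?_⟩
    · rintro (_ | i)
      exacts [hsub₀, hsub i]
    · filter_upwards [cover] with x hx
      by_cases hx₀ : x ∈ Icc a₀ b₀
      · exact ⟨0, N.succ_pos, hx₀⟩
      · obtain ⟨i, hi, hxi⟩ := hx hx₀
        exact ⟨i + 1, Nat.succ_lt_succ hi, hxi⟩
    · rintro (_ | i) hi
      · rw [disjointed_zero]
        exact ⟨first, cap₀⟩
      · obtain ⟨moments, cap⟩ := hI i (Nat.lt_of_succ_lt_succ hi)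
        rw [disjointed_add_one_eq_sdiff]
        rw [Measure.restrict_restrict (measurable_disjointed i)] at moments
        rw [Measure.restrict_apply ((measurable_disjointed i).inter measurableSet_Ioi),
          inter_right_comm] at cap
        exact ⟨moments.trans (hτ i).1, cap⟩

end Intervals

section Representation

variable {μ : Measure ℝ} {n : ℕ} {γ : ℕ → ℝ} {B B' : ℕ → Set ℝ}

theorem exists_mem_Icc_succ {α : Type*} [LinearOrder α] {γ : ℕ → α} {m n : ℕ} (hmn : m ≤ n) {x : α}
    (hm : γ m < x) (hn : x ≤ γ n) : ∃ k ∈ Ico m n, x ∈ Icc (γ k) (γ (k + 1)) := by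
  induction n, hmn using Nat.le_induction with
  | base => exact absurd hn hm.not_ge
  | succ n hmn ih =>
    rcases le_total x (γ n) with hx | hx
    · obtain ⟨k, hk, hxk⟩ := ih hx
      exact ⟨k, Ico_subset_Ico_right n.le_succ hk, hxk⟩
    · exact ⟨n, ⟨hmn, n.lt_succ_self⟩, hx, hn⟩

theorem IsDetRep.measure_inter_Ioi_eq_zero (hdet : IsDetRep μ n B) (hγn : γ n = 1)
    (hic : IsIC n γ B) {i : ℕ} (hi : i < n) : μ (B i ∩ Ioi (γ (i + 1))) = 0 := by
  obtain ⟨hB, -, hdisj⟩ := hdet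
  have covered : B i ∩ Ioi (γ (i + 1)) ⊆ ⋃ j ∈ Ico (i + 1) n, B i ∩ B j := by
    rintro x ⟨hxi, hx⟩
    obtain ⟨k, hk, hxk⟩ := exists_mem_Icc_succ hi hx (hγn ▸ ((hB i hi).2 hxi).2)
    obtain ⟨j, hj, hxj⟩ := mem_iUnion₂.1 (hic k hk.2 hxk)
    obtain ⟨hkj, hjn⟩ := Finset.mem_Ico.1 hj
    exact mem_biUnion ⟨hk.1.trans hkj, hjn⟩ ⟨hxi, hxj⟩
  exact measure_mono_null covered <| (measure_biUnion_null_iff (to_countable _)).2 fun j hj =>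
    hdisj i hi j hj.2 (Nat.ne_of_lt hj.1)

theorem IsDetRep.sum_restrict (hdet : IsDetRep μ n B) (hμ : ∀ᵐ x ∂μ, x ∈ Icc (0 : ℝ) 1) :
    ∑ i ∈ Finset.range n, μ.restrict (B i) = μ := by
  obtain ⟨hB, hcover, hdisj⟩ := hdet
  ext s hs
  rw [Measure.coe_finsetSum, Finset.sum_apply]
  calc ∑ i ∈ Finset.range n, μ.restrict (B i) s
      = ∑ i ∈ Finset.range n, μ.restrict s (B i) := by
        refine Finset.sum_congr rfl fun i hi => ?_
        have measurable_B := (hB i (Finset.mem_range.1 hi)).1.measurableSet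
        rw [Measure.restrict_apply hs, Measure.restrict_apply measurable_B, inter_comm]
    _ = μ.restrict s (Icc 0 1) := by
        rw [← hcover, measure_biUnion_finset₀]
        · intro i hi j hj hij
          exact Measure.absolutelyContinuous_restrict
            (hdisj i (Finset.mem_range.1 hi) j (Finset.mem_range.1 hj) hij)
        · exact fun i hi => (hB i (Finset.mem_range.1 hi)).1.measurableSet.nullMeasurableSet
    _ = μ s := by
        rw [← Measure.restrict_apply_univ s, ← measure_eq_measure_of_null_sdiff (subset_univ _)]
        rw [← compl_eq_univ_sdiff]
        exact Measure.absolutelyContinuous_restrict hμ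

theorem closure_subset_of_ae_mem {X : Type*} [TopologicalSpace X] [MeasurableSpace X]
    {μ : Measure X} {U C : Set X} (hU : IsOpen U) (hC : IsClosed C)
    (hUμ : U ⊆ μ.support) (h : ∀ᵐ x ∂μ, x ∈ U → x ∈ C) : closure U ⊆ C := by
  have null : μ (U \ C) = 0 := measure_eq_zero_iff_ae_notMem.2 <| h.mono fun x hx hxUC =>
    hxUC.2 (hx hxUC.1)
  have := Measure.subset_compl_support_of_isOpen (hU.sdiff hC) null
  exact closure_minimal (fun x hx => by_contra fun hxC => this ⟨hx, hxC⟩ (hUμ hx)) hC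

theorem Icc_subset_of_ae_mem (hμ : μ.support = Icc 0 1) {a b : ℝ} {C : Set ℝ} (hC : IsClosed C)
    (ha : 0 ≤ a) (hab : a < b) (hb : b ≤ 1) (h : ∀ᵐ x ∂μ, x ∈ Ioo a b → x ∈ C) : Icc a b ⊆ C := by
  rw [← closure_Ioo hab.ne]
  exact closure_subset_of_ae_mem isOpen_Ioo hC
    (hμ ▸ Ioo_subset_Icc_self.trans (Icc_subset_Icc ha hb)) h

theorem isDetRep_closure_disjointed {I : ℕ → Set ℝ} (hμ : μ.support = Icc 0 1)
    (hsub : ∀ i, I i ⊆ Icc 0 1) (hfrontier : ∀ i, μ (frontier (I i)) = 0)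
    (hcover : ∀ᵐ x ∂μ, ∃ i < n, x ∈ I i) :
    IsDetRep μ n fun i => closure (disjointed I i) := by
  have closure_subset (i) : closure (disjointed I i) ⊆ Icc (0 : ℝ) 1 :=
    closure_minimal ((disjointed_subset I i).trans (hsub i)) isClosed_Icc
  refine ⟨fun i _ => ⟨isClosed_closure, closure_subset i⟩, subset_antisymm
    (iUnion₂_subset fun i _ => closure_subset i) <| Icc_subset_of_ae_mem hμ
    (isClosed_biUnion_finset fun _ _ => isClosed_closure) le_rfl zero_lt_one le_rfl ?_,
    fun i _ j _ hij => ?_⟩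
  · filter_upwards [hcover] with x ⟨i, hi, hx⟩ _
    have hx : x ∈ ⋃ i ∈ Finset.range n, I i := mem_biUnion (Finset.mem_range.2 hi) hx
    rw [← biUnion_range_disjointed] at hx
    exact biUnion_mono subset_rfl (fun i _ => subset_closure) hx
  · have closure_ae (k) := closure_ae_eq_of_null_frontier
      (measure_frontier_disjointed_eq_zero hfrontier k)
    exact (disjoint_disjointed I hij).aedisjoint.congr (closure_ae i) (closure_ae j)

theorem isIC_closure_disjointed {I : ℕ → Set ℝ} (hμ : μ.support = Icc 0 1)
    (hγ : StrictMonoOn γ (Iic n)) (hγ0 : γ 0 = 0) (hγn : γ n = 1)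
    (hcover : ∀ᵐ x ∂μ, ∃ i < n, x ∈ I i)
    (hcap : ∀ i < n, μ (disjointed I i ∩ Ioi (γ (i + 1))) = 0) :
    IsIC n γ fun i => closure (disjointed I i) := by
  intro i hi
  refine Icc_subset_of_ae_mem hμ (isClosed_biUnion_finset fun _ _ => isClosed_closure)
    (hγ0 ▸ hγ.monotoneOn n.zero_le hi.le i.zero_le) (hγ hi.le hi i.lt_succ_self)
    (hγn ▸ hγ.monotoneOn hi self_mem_Iic hi) ?_
  have capped : ∀ᵐ x ∂μ, ∀ j < n, x ∈ disjointed I j → x ≤ γ (j + 1) := by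
    refine ae_all_iff.2 fun j => ?_
    by_cases hj : j < n
    · filter_upwards [measure_eq_zero_iff_ae_notMem.1 (hcap j hj)] with x hx _ hxj
      exact le_of_not_gt fun h => hx ⟨hxj, h⟩
    · exact .of_forall fun x h => absurd h hj
  filter_upwards [hcover, capped] with x ⟨k, hk, hxk⟩ hx hxi
  have mem_union : x ∈ ⋃ j ∈ Finset.range n, I j := mem_biUnion (Finset.mem_range.2 hk) hxk
  rw [← biUnion_range_disjointed] at mem_union
  obtain ⟨j, hj, hxj⟩ := mem_iUnion₂.1 mem_union
  have hj := Finset.mem_range.1 hj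
  have hij : i < j + 1 := (hγ.lt_iff_lt hi.le hj).1 (hxi.1.trans_le (hx j hj hxj))
  exact mem_biUnion (Finset.mem_Ico.2 ⟨Nat.le_of_lt_succ hij, hj⟩) (subset_closure hxj)

theorem exists_isLaminar_condMean_eq [IsFiniteMeasure μ] [NullSingletonClass μ]
    (hμ : μ.support = Icc 0 1) (hγ0 : γ 0 = 0) (hγn : γ n = 1) (hγ : ∀ i < n, γ i < γ (i + 1))
    (hdet : IsDetRep μ n B) (hic : IsIC n γ B) :
    ∃ BL : ℕ → Set ℝ, IsDetRep μ n BL ∧ IsLaminar n BL ∧ IsIC n γ BL ∧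
      (∀ i < n, μ (BL i) = μ (B i)) ∧ ∀ i < n, condMean μ (BL i) = condMean μ (B i) := by
  have strictMonoOn_γ : StrictMonoOn γ (Iic n) := strictMonoOn_Iic_of_lt_succ hγ
  have monotoneOn_cap : MonotoneOn (fun i => γ (i + 1)) (Iio n) := fun i hi j hj hij =>
    strictMonoOn_γ.monotoneOn hi hj (Nat.succ_le_succ hij)
  have ae_mem : ∀ᵐ x ∂μ, x ∈ Icc (0 : ℝ) 1 := hμ ▸ Measure.support_mem_ae
  have capped (i) (hi : i < n) : μ.restrict (B i) (Ioi (γ (i + 1))) = 0 := by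
    rw [Measure.restrict_apply measurableSet_Ioi, inter_comm]
    exact hdet.measure_inter_Ioi_eq_zero hγn hic hi
  obtain ⟨a, b, hsub, hcover, hI⟩ := exists_Icc_family zero_le_one monotoneOn_cap
    (fun i => ae_restrict_of_ae (s := B i) ae_mem) capped
  rw [hdet.sum_restrict ae_mem] at hcover hI
  have null_frontier (i) := measure_frontier_Icc_eq_zero μ (a i) (b i)
  have moments (i) (hi : i < n) :
      EqMoments (μ.restrict (closure (disjointed (fun i => Icc (a i) (b i)) i)))
        (μ.restrict (B i)) := by
    rw [Measure.restrict_congr_set (closure_ae_eq_of_null_frontier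
      (measure_frontier_disjointed_eq_zero null_frontier i))]
    exact (hI i hi).1
  refine ⟨fun i => closure (disjointed (fun i => Icc (a i) (b i)) i),
    isDetRep_closure_disjointed hμ hsub null_frontier hcover,
    isLaminar_closure_disjointed (fun _ => isClosed_Icc) (fun _ => convex_Icc _ _) n,
    isIC_closure_disjointed hμ strictMonoOn_γ hγ0 hγn hcover fun i hi => (hI i hi).2,
    fun i hi => (moments i hi).measure_eq, fun i hi => (moments i hi).condMean_eq⟩

theorem IsObedient.congr (hob : IsObedient μ n γ B) (hmass : ∀ i < n, μ (B' i) = μ (B i))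
    (hmean : ∀ i < n, condMean μ (B' i) = condMean μ (B i)) : IsObedient μ n γ B' := by
  intro i hi h
  rw [hmean i hi]
  exact hob i hi (hmass i hi ▸ h)

theorem payoff_congr (v : ℕ → ℝ) (hmass : ∀ i < n, μ (B' i) = μ (B i)) :
    payoff μ n v B' = payoff μ n v B :=
  Finset.sum_congr rfl fun i hi => by rw [hmass i (Finset.mem_range.1 hi)]

theorem optimal_representation_laminar_general [IsFiniteMeasure μ] [NullSingletonClass μ]
    (hμ : μ.support = Icc 0 1) (hγ0 : γ 0 = 0) (hγn : γ n = 1) (hγ : ∀ i < n, γ i < γ (i + 1))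
    (v : ℕ → ℝ) (hdet : IsDetRep μ n B) (hob : IsObedient μ n γ B) (hic : IsIC n γ B) :
    ∃ BL : ℕ → Set ℝ, IsDetRep μ n BL ∧ IsLaminar n BL ∧ IsObedient μ n γ BL ∧ IsIC n γ BL ∧
      (∀ i < n, μ (B i) ≠ 0 → μ (BL i) = μ (B i) ∧ condMean μ (BL i) = condMean μ (B i)) ∧
      payoff μ n v BL = payoff μ n v B := by
  obtain ⟨BL, hdetL, hlamL, hicL, hmass, hmean⟩ :=
    exists_isLaminar_condMean_eq hμ hγ0 hγn hγ hdet hic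
  exact ⟨BL, hdetL, hlamL, hob.congr hmass hmean, hicL,
    fun i hi _ => ⟨hmass i hi, hmean i hi⟩, payoff_congr v hmass⟩

end Representation

section Prior

theorem support_restrict_eq_closure_interior {X : Type*} [TopologicalSpace X] [MeasurableSpace X]
    [OpensMeasurableSpace X] {μ : Measure X} [μ.IsOpenPosMeasure] {s : Set X}
    (hs : s ⊆ closure (interior s)) : (μ.restrict s).support = closure (interior s) := by
  refine subset_antisymm ?_ (closure_minimal ?_ Measure.isClosed_support)
  · exact Measure.support_restrict_subset.trans
      (inter_subset_left.trans (closure_minimal hs isClosed_closure))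
  · simpa only [Measure.support_eq_univ, inter_univ] using
      Measure.interior_inter_support (μ := μ) (s := s)

theorem densMeasure_absolutelyContinuous (f : ℝ → ℝ) :
    densMeasure f ≪ volume.restrict (Icc 0 1) :=
  withDensity_absolutelyContinuous _ _

variable {f : ℝ → ℝ}

theorem IsPrior.absolutelyContinuous (hf : IsPrior f) :
    volume.restrict (Icc 0 1) ≪ densMeasure f :=
  withDensity_absolutelyContinuous' hf.meas.ennreal_ofReal.aemeasurable <|
    ae_restrict_of_forall_mem measurableSet_Icc fun x hx =>
      (ENNReal.ofReal_pos.2 (hf.pos x hx)).ne'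

theorem IsPrior.support_eq (hf : IsPrior f) : (densMeasure f).support = Icc 0 1 := by
  have support_volume : (volume.restrict (Icc (0 : ℝ) 1)).support = Icc 0 1 := by
    have closure_interior : closure (interior (Icc (0 : ℝ) 1)) = Icc 0 1 :=
      closure_interior_Icc zero_ne_one
    rw [support_restrict_eq_closure_interior closure_interior.superset, closure_interior]
  rw [← support_volume]
  exact (densMeasure_absolutelyContinuous f).support_mono.antisymm
    hf.absolutelyContinuous.support_mono

end Prior

/-- a Sender-optimal obedient and IC deterministic representation can be
replaced by an obedient and IC laminar representation with the same masses and
conditional means, hence the same payoff. -/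
theorem optimal_representation_laminar
    (f : ℝ → ℝ) (hf : IsPrior f)
    (n : ℕ) (hn : 2 ≤ n)
    (γ : ℕ → ℝ) (hγ0 : γ 0 = 0) (hγn : γ n = 1)
    (hγ : ∀ i < n, γ i < γ (i+1))
    (v : ℕ → ℝ) (hv0 : v 0 = 0) (hv : ∀ i, i + 1 < n → v i < v (i+1))
    (B : ℕ → Set ℝ)
    (hdet : IsDetRep (densMeasure f) n B)
    (hob : IsObedient (densMeasure f) n γ B)
    (hic : IsIC n γ B)
    (hmax : ∀ B' : ℕ → Set ℝ, IsDetRep (densMeasure f) n B' →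
      IsObedient (densMeasure f) n γ B' → IsIC n γ B' →
      payoff (densMeasure f) n v B' ≤ payoff (densMeasure f) n v B) :
    ∃ BL : ℕ → Set ℝ, IsDetRep (densMeasure f) n BL ∧ IsLaminar n BL ∧
      IsObedient (densMeasure f) n γ BL ∧ IsIC n γ BL ∧
      (∀ i < n, densMeasure f (B i) ≠ 0 →
        densMeasure f (BL i) = densMeasure f (B i) ∧
        condMean (densMeasure f) (BL i) = condMean (densMeasure f) (B i)) ∧
      payoff (densMeasure f) n v BL = payoff (densMeasure f) n v B := by
  have : IsProbabilityMeasure (densMeasure f) := ⟨hf.prob⟩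
  have : NullSingletonClass (densMeasure f) := nullSingletonClass_withDensity _
  exact optimal_representation_laminar_general hf.support_eq hγ0 hγn hγ v hdet hob hic

end VerifiableDisclosure
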